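/- arXiv:2104.11289 — 9 statements merged into one kernel-verified Lean document; each statement's English description precedes it below -/
import Mathlib

section
/- Suppose the articulated-hauler kinematic constraints (E1), (E2), (E3) hold and D = l2·cos(α34) + l1·cos(γ − α34) ≠ 0. Then the tractor-unit angular velocity satisfies Ω1 = (sin(γ + α12 − α34)·v12 + l2·cos(α34)·γ̇) / D. -/
/-!
(E1) and (E2) express the velocity of the articulation joint in the trailer frame, computed once
from the trailer and once from the tractor. The trailer moves in the direction `α34`, so `v34` drops
out of the component of the joint velocity normal to that direction. This leaves a linear relation
between `Ω1` and `Ω2`, which (E3) turns into a linear equation for `Ω1` with leading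
coefficient `D`.
-/

theorem normal_component_rotation (γ δ x y : ℝ) :
    Real.cos δ * (Real.sin γ * x + Real.cos γ * y) -
        Real.sin δ * (Real.cos γ * x - Real.sin γ * y) =
      Real.sin (γ - δ) * x + Real.cos (γ - δ) * y := by
  rw [Real.sin_sub, Real.cos_sub]
  ring

theorem joint_normal_velocity_eq {l1 l2 γ v12 α12 v34 α34 Ω1 Ω2 : ℝ}
    (hE1 : v34 * Real.cos α34 =
      Real.cos γ * (v12 * Real.cos α12) -
        Real.sin γ * (v12 * Real.sin α12 - l1 * Ω1))
    (hE2 : v34 * Real.sin α34 + l2 * Ω2 =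
      Real.sin γ * (v12 * Real.cos α12) +
        Real.cos γ * (v12 * Real.sin α12 - l1 * Ω1)) :
    l2 * Real.cos α34 * Ω2 =
      Real.sin (γ + α12 - α34) * v12 - l1 * Real.cos (γ - α34) * Ω1 :=
  calc
    l2 * Real.cos α34 * Ω2
      = Real.cos α34 * (v34 * Real.sin α34 + l2 * Ω2) -
          Real.sin α34 * (v34 * Real.cos α34) := by ring
    _ = Real.sin (γ - α34) * (v12 * Real.cos α12) +
          Real.cos (γ - α34) * (v12 * Real.sin α12 - l1 * Ω1) := by
      rw [hE1, hE2, normal_component_rotation]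
    _ = Real.sin (γ + α12 - α34) * v12 - l1 * Real.cos (γ - α34) * Ω1 := by
      rw [add_sub_right_comm, Real.sin_add]
      ring

/-- Under the articulated-hauler kinematic constraints (E1), (E2), (E3),
with `D = l2·cos α34 + l1·cos (γ − α34) ≠ 0`, the tractor-unit angular velocity satisfies
`Ω1 = (sin (γ + α12 − α34)·v12 + l2·cos α34·γ̇) / D`. -/
theorem tractor_angular_velocity
    (l1 l2 γ γd v12 α12 v34 α34 Ω1 Ω2 : ℝ)
    (hE1 : v34 * Real.cos α34 =
      Real.cos γ * (v12 * Real.cos α12) -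
        Real.sin γ * (v12 * Real.sin α12 - l1 * Ω1))
    (hE2 : v34 * Real.sin α34 + l2 * Ω2 =
      Real.sin γ * (v12 * Real.cos α12) +
        Real.cos γ * (v12 * Real.sin α12 - l1 * Ω1))
    (hE3 : Ω2 = Ω1 - γd)
    (hD : l2 * Real.cos α34 + l1 * Real.cos (γ - α34) ≠ 0) :
    Ω1 = (Real.sin (γ + α12 - α34) * v12 + l2 * Real.cos α34 * γd) /
      (l2 * Real.cos α34 + l1 * Real.cos (γ - α34)) := by
  have normal_balance := joint_normal_velocity_eq hE1 hE2
  rw [hE3] at normal_balance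
  rw [eq_div_iff hD]
  linear_combination normal_balance
end

section
/- Suppose the articulated-hauler kinematic constraints (E1), (E2), (E3) hold and D = l2·cos(α34) + l1·cos(γ − α34) ≠ 0. Then the trailer-unit angular velocity satisfies Ω2 = (sin(γ + α12 − α34)·v12 − l1·cos(γ − α34)·γ̇) / D. -/
/-!
Equations (E1) and (E2) give the joint velocity in the trailer frame as the rotation by `γ` of its
components in the tractor frame. Projecting it onto the normal of the trailer-unit midpoint velocity
removes the unknown speed `v34` and leaves one linear relation between `Ω1` and `Ω2`; together with
(E3) it determines `Ω2`.
-/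

section AngularVelocityBalance

open Real

lemma cos_mul_rotation_snd_sub_sin_mul_rotation_fst (x y θ φ : ℝ) :
    cos φ * (sin θ * x + cos θ * y) - sin φ * (cos θ * x - sin θ * y) =
      sin (θ - φ) * x + cos (θ - φ) * y := by
  rw [sin_sub, cos_sub]
  ring

lemma cos_mul_eq_of_polar_add_eq_rotation {x y θ φ v u : ℝ}
    (hfst : v * cos φ = cos θ * x - sin θ * y)
    (hsnd : v * sin φ + u = sin θ * x + cos θ * y) :
    cos φ * u = sin (θ - φ) * x + cos (θ - φ) * y :=
  calc
    cos φ * u = cos φ * (v * sin φ + u) - sin φ * (v * cos φ) := by ring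
    _ = cos φ * (sin θ * x + cos θ * y) - sin φ * (cos θ * x - sin θ * y) := by rw [hfst, hsnd]
    _ = sin (θ - φ) * x + cos (θ - φ) * y :=
      cos_mul_rotation_snd_sub_sin_mul_rotation_fst x y θ φ

lemma sin_mul_polar_fst_add_cos_mul_polar_snd (v α θ : ℝ) :
    sin θ * (v * cos α) + cos θ * (v * sin α) = sin (θ + α) * v := by
  rw [sin_add]
  ring

lemma angular_velocity_balance {l1 l2 γ v12 α12 v34 α34 Ω1 Ω2 : ℝ}
    (hE1 : v34 * cos α34 = cos γ * (v12 * cos α12) - sin γ * (v12 * sin α12 - l1 * Ω1))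
    (hE2 : v34 * sin α34 + l2 * Ω2 =
      sin γ * (v12 * cos α12) + cos γ * (v12 * sin α12 - l1 * Ω1)) :
    l2 * cos α34 * Ω2 + l1 * cos (γ - α34) * Ω1 = sin (γ + α12 - α34) * v12 := by
  have hnormal : cos α34 * (l2 * Ω2) =
      sin (γ - α34) * (v12 * cos α12) + cos (γ - α34) * (v12 * sin α12 - l1 * Ω1) :=
    cos_mul_eq_of_polar_add_eq_rotation hE1 hE2
  calc
    l2 * cos α34 * Ω2 + l1 * cos (γ - α34) * Ω1 =
        sin (γ - α34) * (v12 * cos α12) + cos (γ - α34) * (v12 * sin α12) := by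
      linear_combination hnormal
    _ = sin (γ - α34 + α12) * v12 := sin_mul_polar_fst_add_cos_mul_polar_snd v12 α12 (γ - α34)
    _ = sin (γ + α12 - α34) * v12 := by rw [sub_add_eq_add_sub]

end AngularVelocityBalance

/-- Under the articulated-hauler kinematic constraints (E1), (E2), (E3),
with `D ≠ 0`, the trailer-unit angular velocity satisfies
`Ω2 = (sin (γ + α12 − α34)·v12 − l1·cos (γ − α34)·γ̇) / D`. -/
theorem trailer_angular_velocity
    (l1 l2 γ γd v12 α12 v34 α34 Ω1 Ω2 : ℝ)
    (hE1 : v34 * Real.cos α34 =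
      Real.cos γ * (v12 * Real.cos α12) -
        Real.sin γ * (v12 * Real.sin α12 - l1 * Ω1))
    (hE2 : v34 * Real.sin α34 + l2 * Ω2 =
      Real.sin γ * (v12 * Real.cos α12) +
        Real.cos γ * (v12 * Real.sin α12 - l1 * Ω1))
    (hE3 : Ω2 = Ω1 - γd)
    (hD : l2 * Real.cos α34 + l1 * Real.cos (γ - α34) ≠ 0) :
    Ω2 = (Real.sin (γ + α12 - α34) * v12 - l1 * Real.cos (γ - α34) * γd) /
      (l2 * Real.cos α34 + l1 * Real.cos (γ - α34)) := by
  have hbalance : l2 * Real.cos α34 * Ω2 + l1 * Real.cos (γ - α34) * Ω1 =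
      Real.sin (γ + α12 - α34) * v12 :=
    angular_velocity_balance hE1 hE2
  have hΩ1 : Ω1 = Ω2 + γd := eq_add_of_sub_eq hE3.symm
  rw [hΩ1] at hbalance
  rw [eq_div_iff hD]
  linear_combination hbalance
end

section
/- Suppose the articulated-hauler kinematic constraints (E1), (E2), (E3) hold and D = l2·cos(α34) + l1·cos(γ − α34) ≠ 0. Then the trailer-unit speed satisfies v34 = ((l2·cos(γ + α12) + l1·cos(α12))·v12 + l1·l2·sin(γ)·γ̇) / D. -/
/-!
Projecting the velocity of the articulation joint on the trailer axis and on the tractor axis gives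
two longitudinal equations, in which the angular velocities appear only as `l1 * Ω1 * sin γ` and
`-(l2 * Ω2 * sin γ)`. Weighting the equations by `l2` and `l1` gives both terms the factor
`l1 * l2 * sin γ`, so the angular velocities enter the sum only through `Ω1 - Ω2`, which is the
steering rate.
-/

theorem eq_mul_add_mul_of_rotation {R : Type*} [CommRing R] {c s x y x' y' : R}
    (hcs : c ^ 2 + s ^ 2 = 1) (hx : x' = c * x - s * y) (hy : y' = s * x + c * y) :
    x = c * x' + s * y' := by
  rw [hx, hy]
  linear_combination -x * hcs

section LongitudinalVelocity

variable {γ v12 α12 v34 α34 w1 w2 : ℝ}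

theorem trailer_longitudinal_velocity
    (h : v34 * Real.cos α34 =
      Real.cos γ * (v12 * Real.cos α12) - Real.sin γ * (v12 * Real.sin α12 - w1)) :
    v34 * Real.cos α34 = v12 * Real.cos (γ + α12) + w1 * Real.sin γ := by
  rw [h, Real.cos_add]
  ring

theorem tractor_longitudinal_velocity
    (hlong : v34 * Real.cos α34 =
      Real.cos γ * (v12 * Real.cos α12) - Real.sin γ * (v12 * Real.sin α12 - w1))
    (hlat : v34 * Real.sin α34 + w2 =
      Real.sin γ * (v12 * Real.cos α12) + Real.cos γ * (v12 * Real.sin α12 - w1)) :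
    v34 * Real.cos (γ - α34) = v12 * Real.cos α12 - w2 * Real.sin γ := by
  rw [eq_mul_add_mul_of_rotation (Real.cos_sq_add_sin_sq γ) hlong hlat, Real.cos_sub]
  ring

end LongitudinalVelocity

/-- Under the articulated-hauler kinematic constraints (E1), (E2), (E3),
with `D ≠ 0`, the trailer-unit speed satisfies
`v34 = ((l2·cos (γ + α12) + l1·cos α12)·v12 + l1·l2·sin γ·γ̇) / D`. -/
theorem trailer_speed
    (l1 l2 γ γd v12 α12 v34 α34 Ω1 Ω2 : ℝ)
    (hE1 : v34 * Real.cos α34 =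
      Real.cos γ * (v12 * Real.cos α12) -
        Real.sin γ * (v12 * Real.sin α12 - l1 * Ω1))
    (hE2 : v34 * Real.sin α34 + l2 * Ω2 =
      Real.sin γ * (v12 * Real.cos α12) +
        Real.cos γ * (v12 * Real.sin α12 - l1 * Ω1))
    (hE3 : Ω2 = Ω1 - γd)
    (hD : l2 * Real.cos α34 + l1 * Real.cos (γ - α34) ≠ 0) :
    v34 = ((l2 * Real.cos (γ + α12) + l1 * Real.cos α12) * v12 +
        l1 * l2 * Real.sin γ * γd) /
      (l2 * Real.cos α34 + l1 * Real.cos (γ - α34)) := by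
  have htrailer := trailer_longitudinal_velocity hE1
  have htractor := tractor_longitudinal_velocity hE1 hE2
  have hrate : Ω1 - Ω2 = γd := by rw [hE3, sub_sub_cancel]
  rw [eq_div_iff hD]
  calc
    v34 * (l2 * Real.cos α34 + l1 * Real.cos (γ - α34))
      = l2 * (v34 * Real.cos α34) + l1 * (v34 * Real.cos (γ - α34)) := by ring
    _ = l2 * (v12 * Real.cos (γ + α12) + l1 * Ω1 * Real.sin γ) +
          l1 * (v12 * Real.cos α12 - l2 * Ω2 * Real.sin γ) := by rw [htrailer, htractor]
    _ = (l2 * Real.cos (γ + α12) + l1 * Real.cos α12) * v12 +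
          l1 * l2 * Real.sin γ * (Ω1 - Ω2) := by ring
    _ = (l2 * Real.cos (γ + α12) + l1 * Real.cos α12) * v12 +
          l1 * l2 * Real.sin γ * γd := by rw [hrate]
end

section
/- If D = l2·cos(α34) + l1·cos(γ − α34) ≠ 0, then the linear system consisting of the articulated-hauler kinematic constraints (E1), (E2), (E3) has exactly one solution (v34, Ω1, Ω2) in ℝ³ for any given real values of v12, α12, α34, γ, γ̇, l1, l2. -/
/-! The constraints are a linear system `A *ᵥ ![v34, Ω1, Ω2] = b`. By the subtraction formula for
the cosine, `det A = D`, so `A` is invertible when `D ≠ 0`. -/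

section

open Matrix

theorem bijective_mulVec_of_isUnit_det {n R : Type*} [Fintype n] [DecidableEq n] [CommRing R]
    {A : Matrix n n R} (hA : IsUnit A.det) : Function.Bijective A.mulVec :=
  have hA' : IsUnit A := (isUnit_iff_isUnit_det A).mpr hA
  ⟨mulVec_injective_of_isUnit hA', mulVec_surjective_iff_isUnit.mpr hA'⟩

theorem bijective_vec3_of_prod (α : Type*) :
    Function.Bijective fun x : α × α × α => ![x.1, x.2.1, x.2.2] :=
  Function.bijective_iff_has_inverse.mpr
    ⟨fun f => (f 0, f 1, f 2), fun _ => rfl, FinVec.etaExpand_eq⟩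

variable (l1 l2 γ γd v12 α12 α34 v Ω₁ Ω₂ : ℝ)

/-- The coefficient matrix of the constraints (E1), (E2), (E3) in the unknowns
`![v34, Ω1, Ω2]`, with all unknowns moved to the left-hand side. -/
noncomputable def kinematicMatrix : Matrix (Fin 3) (Fin 3) ℝ :=
  !![Real.cos α34, -(l1 * Real.sin γ), 0;
     Real.sin α34, l1 * Real.cos γ, l2;
     0, -1, 1]

/-- The right-hand side of the constraints (E1), (E2), (E3) when all unknowns are on the
left: its first two entries are the tractor-unit midpoint velocity rotated by `γ`. -/
noncomputable def kinematicVector : Fin 3 → ℝ :=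
  ![Real.cos γ * (v12 * Real.cos α12) - Real.sin γ * (v12 * Real.sin α12),
    Real.sin γ * (v12 * Real.cos α12) + Real.cos γ * (v12 * Real.sin α12),
    -γd]

theorem det_kinematicMatrix :
    (kinematicMatrix l1 l2 γ α34).det = l2 * Real.cos α34 + l1 * Real.cos (γ - α34) := by
  simp only [kinematicMatrix, det_fin_three, of_apply, cons_val, Real.cos_sub]
  ring

theorem kinematicMatrix_mulVec :
    kinematicMatrix l1 l2 γ α34 *ᵥ ![v, Ω₁, Ω₂] =
      ![v * Real.cos α34 - l1 * Real.sin γ * Ω₁,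
        v * Real.sin α34 + l1 * Real.cos γ * Ω₁ + l2 * Ω₂,
        Ω₂ - Ω₁] := by
  simp only [kinematicMatrix, cons_mulVec, empty_mulVec, vec3_dotProduct']
  apply vec3_eq <;> ring

theorem kinematicMatrix_mulVec_eq_kinematicVector_iff :
    kinematicMatrix l1 l2 γ α34 *ᵥ ![v, Ω₁, Ω₂] = kinematicVector γ γd v12 α12 ↔
      v * Real.cos α34 =
        Real.cos γ * (v12 * Real.cos α12) -
          Real.sin γ * (v12 * Real.sin α12 - l1 * Ω₁) ∧
      v * Real.sin α34 + l2 * Ω₂ =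
        Real.sin γ * (v12 * Real.cos α12) +
          Real.cos γ * (v12 * Real.sin α12 - l1 * Ω₁) ∧
      Ω₂ = Ω₁ - γd := by
  simp only [kinematicMatrix_mulVec, kinematicVector, vecCons_inj, and_true]
  refine and_congr ?_ (and_congr ?_ ?_) <;>
    constructor <;> intro h <;> linear_combination h

end

/-- If `D = l2·cos α34 + l1·cos (γ − α34) ≠ 0`, then the linear system
(E1), (E2), (E3), viewed in the unknowns `(v34, Ω1, Ω2)`, has exactly one solution in `ℝ³`
for any given real `v12, α12, α34, γ, γ̇, l1, l2`. -/
theorem kinematic_system_unique_solution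
    (l1 l2 γ γd v12 α12 α34 : ℝ)
    (hD : l2 * Real.cos α34 + l1 * Real.cos (γ - α34) ≠ 0) :
    ∃! x : ℝ × ℝ × ℝ,
      x.1 * Real.cos α34 =
        Real.cos γ * (v12 * Real.cos α12) -
          Real.sin γ * (v12 * Real.sin α12 - l1 * x.2.1) ∧
      x.1 * Real.sin α34 + l2 * x.2.2 =
        Real.sin γ * (v12 * Real.cos α12) +
          Real.cos γ * (v12 * Real.sin α12 - l1 * x.2.1) ∧
      x.2.2 = x.2.1 - γd := by
  have hdet : IsUnit (kinematicMatrix l1 l2 γ α34).det := by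
    rwa [det_kinematicMatrix, isUnit_iff_ne_zero]
  have hbij : Function.Bijective fun x : ℝ × ℝ × ℝ =>
      (kinematicMatrix l1 l2 γ α34).mulVec ![x.1, x.2.1, x.2.2] :=
    (bijective_mulVec_of_isUnit_det hdet).comp (bijective_vec3_of_prod ℝ)
  simpa only [kinematicMatrix_mulVec_eq_kinematicVector_iff] using
    hbij.existsUnique (kinematicVector γ γd v12 α12)
end

section
/- Suppose the articulated-hauler kinematic constraints (E1), (E2), (E3) hold and D = l2·cos(α34) + l1·cos(γ − α34) ≠ 0. Then v34 = q(α12)·v12 + q(−π/2)·l1·γ̇, where q(a) = (l2·cos(a + γ) + l1·cos(a)) / D. -/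
/-!
The joint velocity, resolved in the tractor and trailer frames, is related by the rotation through
`γ`. Its component along the trailer does not involve `Ω2`, and its component along the tractor does
not involve `Ω1`. Weighting the first by `l2` and the second by `l1` leaves the angular velocities
only in the combination `l1 * l2 * sin γ * (Ω1 - Ω2)`, which gives the formula without dividing by
`sin γ`; the term in `γ̇` has coefficient `q (-π/2) * l1` because `cos (-π/2 + γ) = sin γ` and
`cos (-π/2) = 0`.
-/

namespace ArticulatedHauler

open Real

lemma rotate_polar_sub_fst (γ v α w : ℝ) :
    cos γ * (v * cos α) - sin γ * (v * sin α - w) = v * cos (α + γ) + w * sin γ := by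
  rw [cos_add]
  ring

lemma fst_eq_of_rotate_eq_polar_add {γ x y v α w : ℝ}
    (hfst : v * cos α = cos γ * x - sin γ * y)
    (hsnd : v * sin α + w = sin γ * x + cos γ * y) :
    x = v * cos (γ - α) + w * sin γ :=
  calc
    x = cos γ * (cos γ * x - sin γ * y) + sin γ * (sin γ * x + cos γ * y) := by
      linear_combination -x * cos_sq_add_sin_sq γ
    _ = cos γ * (v * cos α) + sin γ * (v * sin α + w) := by rw [hfst, hsnd]
    _ = v * cos (γ - α) + w * sin γ := by
      rw [cos_sub]
      ring

lemma trailer_speed_mul_eq {l1 l2 γ v12 α12 v34 α34 Ω1 Ω2 : ℝ}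
    (hE1 : v34 * cos α34 =
      cos γ * (v12 * cos α12) - sin γ * (v12 * sin α12 - l1 * Ω1))
    (hE2 : v34 * sin α34 + l2 * Ω2 =
      sin γ * (v12 * cos α12) + cos γ * (v12 * sin α12 - l1 * Ω1)) :
    v34 * (l2 * cos α34 + l1 * cos (γ - α34)) =
      (l2 * cos (α12 + γ) + l1 * cos α12) * v12 + l2 * sin γ * l1 * (Ω1 - Ω2) := by
  have along_trailer : v34 * cos α34 = v12 * cos (α12 + γ) + l1 * Ω1 * sin γ :=
    hE1.trans (rotate_polar_sub_fst γ v12 α12 (l1 * Ω1))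
  have along_tractor : v12 * cos α12 = v34 * cos (γ - α34) + l2 * Ω2 * sin γ :=
    fst_eq_of_rotate_eq_polar_add hE1 hE2
  linear_combination l2 * along_trailer - l1 * along_tractor

end ArticulatedHauler

/-- Under the kinematic constraints (E1), (E2), (E3), with `D ≠ 0`,
`v34 = q α12 · v12 + q (−π/2) · l1 · γ̇`, where `q a = (l2·cos (a + γ) + l1·cos a) / D`. -/
theorem trailer_speed_q_form
    (l1 l2 γ γd v12 α12 v34 α34 Ω1 Ω2 : ℝ)
    (hE1 : v34 * Real.cos α34 =
      Real.cos γ * (v12 * Real.cos α12) -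
        Real.sin γ * (v12 * Real.sin α12 - l1 * Ω1))
    (hE2 : v34 * Real.sin α34 + l2 * Ω2 =
      Real.sin γ * (v12 * Real.cos α12) +
        Real.cos γ * (v12 * Real.sin α12 - l1 * Ω1))
    (hE3 : Ω2 = Ω1 - γd)
    (hD : l2 * Real.cos α34 + l1 * Real.cos (γ - α34) ≠ 0) :
    v34 =
      (fun a : ℝ => (l2 * Real.cos (a + γ) + l1 * Real.cos a) /
        (l2 * Real.cos α34 + l1 * Real.cos (γ - α34))) α12 * v12 +
      (fun a : ℝ => (l2 * Real.cos (a + γ) + l1 * Real.cos a) /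
        (l2 * Real.cos α34 + l1 * Real.cos (γ - α34))) (-(Real.pi / 2)) * l1 * γd := by
  have speed_mul := ArticulatedHauler.trailer_speed_mul_eq hE1 hE2
  have articulation_rate : Ω1 - Ω2 = γd := by rw [hE3, sub_sub_cancel]
  have numerator_at_neg_pi_div_two :
      l2 * Real.cos (-(Real.pi / 2) + γ) + l1 * Real.cos (-(Real.pi / 2)) = l2 * Real.sin γ := by
    rw [neg_add_eq_sub, Real.cos_sub_pi_div_two, Real.cos_neg, Real.cos_pi_div_two, mul_zero,
      add_zero]
  rw [articulation_rate, ← numerator_at_neg_pi_div_two] at speed_mul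
  rw [eq_div_of_mul_eq hD speed_mul]
  ring
end

section
/- Suppose the articulated-hauler kinematic constraints (E1), (E2), (E3) hold and D = l2·cos(α34) + l1·cos(γ − α34) ≠ 0. Then Ω1 = p(α12)·v12 + p(π/2 − γ)·l2·γ̇, where p(a) = sin(γ + a − α34) / D. -/
/-!
Both sides of (E1)–(E2) are the velocity of the articulation joint, written in trailer axes.
Its component normal to the trailer velocity does not involve `v34`, so comparing these components
leaves an equation that is linear in `Ω1` and `Ω2`, with `D` as the coefficient of `Ω1` once (E3)
eliminates `Ω2`.
-/

theorem mul_cos_eq_of_rotation {v w x y γ α : ℝ}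
    (h_long : v * Real.cos α = Real.cos γ * x - Real.sin γ * y)
    (h_lat : v * Real.sin α + w = Real.sin γ * x + Real.cos γ * y) :
    w * Real.cos α = x * Real.sin (γ - α) + y * Real.cos (γ - α) := by
  rw [Real.sin_sub, Real.cos_sub]
  linear_combination Real.cos α * h_lat - Real.sin α * h_long

theorem velocity_balance_normal_to_trailer_velocity
    {l1 l2 γ v12 α12 v34 α34 Ω1 Ω2 : ℝ}
    (hE1 : v34 * Real.cos α34 =
      Real.cos γ * (v12 * Real.cos α12) -
        Real.sin γ * (v12 * Real.sin α12 - l1 * Ω1))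
    (hE2 : v34 * Real.sin α34 + l2 * Ω2 =
      Real.sin γ * (v12 * Real.cos α12) +
        Real.cos γ * (v12 * Real.sin α12 - l1 * Ω1)) :
    l2 * Ω2 * Real.cos α34 + l1 * Ω1 * Real.cos (γ - α34) =
      v12 * Real.sin (γ + α12 - α34) := by
  have h_normal := mul_cos_eq_of_rotation hE1 hE2
  rw [add_sub_right_comm, Real.sin_add]
  linear_combination h_normal

/-- Under the kinematic constraints (E1), (E2), (E3), with `D ≠ 0`,
`Ω1 = p α12 · v12 + p (π/2 − γ) · l2 · γ̇`, where `p a = sin (γ + a − α34) / D`. -/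
theorem tractor_angular_velocity_p_form
    (l1 l2 γ γd v12 α12 v34 α34 Ω1 Ω2 : ℝ)
    (hE1 : v34 * Real.cos α34 =
      Real.cos γ * (v12 * Real.cos α12) -
        Real.sin γ * (v12 * Real.sin α12 - l1 * Ω1))
    (hE2 : v34 * Real.sin α34 + l2 * Ω2 =
      Real.sin γ * (v12 * Real.cos α12) +
        Real.cos γ * (v12 * Real.sin α12 - l1 * Ω1))
    (hE3 : Ω2 = Ω1 - γd)
    (hD : l2 * Real.cos α34 + l1 * Real.cos (γ - α34) ≠ 0) :
    Ω1 =
      (fun a : ℝ => Real.sin (γ + a - α34) /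
        (l2 * Real.cos α34 + l1 * Real.cos (γ - α34))) α12 * v12 +
      (fun a : ℝ => Real.sin (γ + a - α34) /
        (l2 * Real.cos α34 + l1 * Real.cos (γ - α34))) (Real.pi / 2 - γ) * l2 * γd := by
  have h_balance := velocity_balance_normal_to_trailer_velocity hE1 hE2
  have h_solve : Ω1 * (l2 * Real.cos α34 + l1 * Real.cos (γ - α34)) =
      Real.sin (γ + α12 - α34) * v12 + Real.cos α34 * l2 * γd := by
    rw [hE3] at h_balance
    linear_combination h_balance
  have h_sin : Real.sin (γ + (Real.pi / 2 - γ) - α34) = Real.cos α34 := by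
    rw [add_sub_cancel, Real.sin_pi_div_two_sub]
  calc
    Ω1 = (Real.sin (γ + α12 - α34) * v12 + Real.cos α34 * l2 * γd) /
        (l2 * Real.cos α34 + l1 * Real.cos (γ - α34)) := eq_div_of_mul_eq hD h_solve
    _ = _ := by
      simp only [h_sin]
      ring
end

section
/- Suppose the articulated-hauler kinematic constraints (E1), (E2), (E3) hold and D = l2·cos(α34) + l1·cos(γ − α34) ≠ 0. Then Ω2 = p(α12)·v12 + p(−π/2)·l1·γ̇, where p(a) = sin(γ + a − α34) / D. -/
/-!
The trailer velocity `v34 (cos α34, sin α34)` has no component along its normal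
`(-sin α34, cos α34)`, so projecting (E1), (E2) onto that normal eliminates `v34`. Substituting
`Ω1 = Ω2 + γ̇` then splits the articulation-joint term `-l1 Ω1 cos (γ - α34)` into a part
proportional to `Ω2`, which completes `D`, and the steering-rate term, whose coefficient is
`-cos (γ - α34) = sin (γ - π/2 - α34)`.
-/

theorem mul_cos_eq_of_rotated_velocity {v w x y γ α : ℝ}
    (h_longitudinal : v * Real.cos α = Real.cos γ * x - Real.sin γ * y)
    (h_lateral : v * Real.sin α + w = Real.sin γ * x + Real.cos γ * y) :
    w * Real.cos α = Real.sin (γ - α) * x + Real.cos (γ - α) * y := by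
  rw [Real.sin_sub, Real.cos_sub]
  linear_combination Real.cos α * h_lateral - Real.sin α * h_longitudinal

theorem sin_add_sub_eq (γ a α : ℝ) :
    Real.sin (γ + a - α) =
      Real.sin (γ - α) * Real.cos a + Real.cos (γ - α) * Real.sin a := by
  rw [add_sub_right_comm, Real.sin_add]

theorem trailer_angular_velocity_mul_eq
    {l1 l2 γ γd v12 α12 v34 α34 Ω1 Ω2 : ℝ}
    (hE1 : v34 * Real.cos α34 =
      Real.cos γ * (v12 * Real.cos α12) -
        Real.sin γ * (v12 * Real.sin α12 - l1 * Ω1))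
    (hE2 : v34 * Real.sin α34 + l2 * Ω2 =
      Real.sin γ * (v12 * Real.cos α12) +
        Real.cos γ * (v12 * Real.sin α12 - l1 * Ω1))
    (hE3 : Ω2 = Ω1 - γd) :
    Ω2 * (l2 * Real.cos α34 + l1 * Real.cos (γ - α34)) =
      Real.sin (γ + α12 - α34) * v12 +
        Real.sin (γ + -(Real.pi / 2) - α34) * l1 * γd := by
  have normal_balance : l2 * Ω2 * Real.cos α34 =
      Real.sin (γ - α34) * (v12 * Real.cos α12) +
        Real.cos (γ - α34) * (v12 * Real.sin α12 - l1 * Ω1) :=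
    mul_cos_eq_of_rotated_velocity hE1 hE2
  have quarter_turn : Real.sin (γ + -(Real.pi / 2) - α34) = -Real.cos (γ - α34) := by
    simp [sin_add_sub_eq]
  rw [quarter_turn, sin_add_sub_eq]
  linear_combination normal_balance + l1 * Real.cos (γ - α34) * hE3

/-- Under the kinematic constraints (E1), (E2), (E3), with `D ≠ 0`,
`Ω2 = p α12 · v12 + p (−π/2) · l1 · γ̇`, where `p a = sin (γ + a − α34) / D`. -/
theorem trailer_angular_velocity_p_form
    (l1 l2 γ γd v12 α12 v34 α34 Ω1 Ω2 : ℝ)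
    (hE1 : v34 * Real.cos α34 =
      Real.cos γ * (v12 * Real.cos α12) -
        Real.sin γ * (v12 * Real.sin α12 - l1 * Ω1))
    (hE2 : v34 * Real.sin α34 + l2 * Ω2 =
      Real.sin γ * (v12 * Real.cos α12) +
        Real.cos γ * (v12 * Real.sin α12 - l1 * Ω1))
    (hE3 : Ω2 = Ω1 - γd)
    (hD : l2 * Real.cos α34 + l1 * Real.cos (γ - α34) ≠ 0) :
    Ω2 =
      (fun a : ℝ => Real.sin (γ + a - α34) /
        (l2 * Real.cos α34 + l1 * Real.cos (γ - α34))) α12 * v12 +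
      (fun a : ℝ => Real.sin (γ + a - α34) /
        (l2 * Real.cos α34 + l1 * Real.cos (γ - α34))) (-(Real.pi / 2)) * l1 * γd := by
  beta_reduce
  rw [div_mul_eq_mul_div, div_mul_eq_mul_div, div_mul_eq_mul_div, ← add_div, eq_div_iff hD]
  exact trailer_angular_velocity_mul_eq hE1 hE2 hE3
end

section
/- Suppose the articulated-hauler kinematic constraints (E1), (E2), (E3) hold, D = l2·cos(α34) + l1·cos(γ − α34) ≠ 0, and the steering angle is in steady state, i.e. γ̇ = 0. Then Ω1 = Ω2 = p(α12)·v12, where p(a) = sin(γ + a − α34) / D; in particular, 1/p(α12) is the tractor unit's steady-state turning radius whenever p(α12) ≠ 0 and v12 ≠ 0. -/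
/-!
Projecting the articulation joint's velocity onto the normal `(-sin α34, cos α34)` of the trailer's
velocity eliminates the unknown speed `v34`, leaving one linear relation between `Ω1` and `Ω2`.
Substituting `Ω2 = Ω1 - γ̇` makes `D` the coefficient of `Ω1`.
-/

namespace ArticulatedHauler

open Real (cos sin)

theorem mul_cos_eq_of_rotation {x y u w γ α : ℝ}
    (hfst : x * cos α = cos γ * u - sin γ * w)
    (hsnd : x * sin α + y = sin γ * u + cos γ * w) :
    y * cos α = sin (γ - α) * u + cos (γ - α) * w := by
  rw [Real.sin_sub, Real.cos_sub]
  linear_combination cos α * hsnd - sin α * hfst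

variable {l1 l2 γ γd v12 α12 v34 α34 Ω1 Ω2 : ℝ}

theorem angular_velocity_balance
    (hE1 : v34 * cos α34 =
      cos γ * (v12 * cos α12) - sin γ * (v12 * sin α12 - l1 * Ω1))
    (hE2 : v34 * sin α34 + l2 * Ω2 =
      sin γ * (v12 * cos α12) + cos γ * (v12 * sin α12 - l1 * Ω1)) :
    l2 * cos α34 * Ω2 + l1 * cos (γ - α34) * Ω1 = sin (γ + α12 - α34) * v12 := by
  have hproj : l2 * Ω2 * cos α34 =
      sin (γ - α34) * (v12 * cos α12) + cos (γ - α34) * (v12 * sin α12 - l1 * Ω1) :=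
    mul_cos_eq_of_rotation hE1 hE2
  rw [add_sub_right_comm, Real.sin_add]
  linear_combination hproj

theorem tractor_angular_velocity_eq
    (hE1 : v34 * cos α34 =
      cos γ * (v12 * cos α12) - sin γ * (v12 * sin α12 - l1 * Ω1))
    (hE2 : v34 * sin α34 + l2 * Ω2 =
      sin γ * (v12 * cos α12) + cos γ * (v12 * sin α12 - l1 * Ω1))
    (hE3 : Ω2 = Ω1 - γd)
    (hD : l2 * cos α34 + l1 * cos (γ - α34) ≠ 0) :
    Ω1 = (sin (γ + α12 - α34) * v12 + l2 * cos α34 * γd) /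
      (l2 * cos α34 + l1 * cos (γ - α34)) := by
  have hbalance := angular_velocity_balance hE1 hE2
  rw [hE3] at hbalance
  rw [eq_div_iff hD]
  linear_combination hbalance

end ArticulatedHauler

/-- Under (E1), (E2), (E3), with `D ≠ 0` and steady-state steering
`γ̇ = 0`, we have `Ω1 = Ω2 = p α12 · v12` where `p a = sin (γ + a − α34) / D`;
in particular the tractor unit's steady-state turning radius `v12 / Ω1` equals
`1 / p α12` whenever `p α12 ≠ 0` and `v12 ≠ 0`. -/
theorem steady_state_angular_velocities
    (l1 l2 γ γd v12 α12 v34 α34 Ω1 Ω2 : ℝ)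
    (hE1 : v34 * Real.cos α34 =
      Real.cos γ * (v12 * Real.cos α12) -
        Real.sin γ * (v12 * Real.sin α12 - l1 * Ω1))
    (hE2 : v34 * Real.sin α34 + l2 * Ω2 =
      Real.sin γ * (v12 * Real.cos α12) +
        Real.cos γ * (v12 * Real.sin α12 - l1 * Ω1))
    (hE3 : Ω2 = Ω1 - γd)
    (hD : l2 * Real.cos α34 + l1 * Real.cos (γ - α34) ≠ 0)
    (hss : γd = 0) :
    Ω1 = Ω2 ∧
    Ω1 = (fun a : ℝ => Real.sin (γ + a - α34) /
        (l2 * Real.cos α34 + l1 * Real.cos (γ - α34))) α12 * v12 ∧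
    ((fun a : ℝ => Real.sin (γ + a - α34) /
        (l2 * Real.cos α34 + l1 * Real.cos (γ - α34))) α12 ≠ 0 → v12 ≠ 0 →
      v12 / Ω1 =
        1 / (fun a : ℝ => Real.sin (γ + a - α34) /
          (l2 * Real.cos α34 + l1 * Real.cos (γ - α34))) α12) := by
  have hΩ : Ω1 = Real.sin (γ + α12 - α34) /
      (l2 * Real.cos α34 + l1 * Real.cos (γ - α34)) * v12 := by
    simpa [hss, div_mul_eq_mul_div] using
      ArticulatedHauler.tractor_angular_velocity_eq hE1 hE2 hE3 hD
  refine ⟨by rw [hE3, hss, sub_zero], hΩ, fun _ hv => ?_⟩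
  rw [hΩ, div_mul_cancel_right₀ hv, one_div]
end

section
/- Suppose the articulated-hauler kinematic constraints (E1), (E2), (E3) hold, D = l2·cos(α34) + l1·cos(γ − α34) ≠ 0, and the slip angles vanish, α12 = α34 = 0. Then v34 = ((l2·cos(γ) + l1)·v12 + l1·l2·sin(γ)·γ̇) / (l2 + l1·cos(γ)); consequently, if moreover mean wheel speeds relate to unit speeds by v12 = ω_f·r and v34 = ω_b·r for a tire radius r, then ω_b·r − ((l2·cos(γ) + l1)/(l2 + l1·cos(γ)))·ω_f·r − (l2·sin(γ)/(l2 + l1·cos(γ)))·l1·γ̇ = 0. -/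
/-!
In the trailer frame the vector from the trailer midpoint to the tractor midpoint is
`ρ = (l2 + l1 cos γ, l1 sin γ)`, so `|ρ|² = l1² + l2² + 2 l1 l2 cos γ` depends on time only
through `γ`. Differentiating, the velocities `V12`, `V34` of the two midpoints satisfy
`⟪V34, ρ⟫ = ⟪V12, ρ⟫ + l1 l2 sin γ · γ̇`. In terms of the constraints, this is the combination
`(l2 + l1 cos γ) · (E1) + l1 sin γ · (E2)`, from which the angular velocities drop out, as a rigid
rotation of the whole vehicle does not change `|ρ|`.
-/

theorem trailer_velocity_projection_eq {R : Type*} [CommRing R]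
    {l1 l2 c s γd u12 w12 u34 w34 Ω1 Ω2 : R} (hcs : s ^ 2 + c ^ 2 = 1)
    (hlong : u34 = c * u12 - s * (w12 - l1 * Ω1))
    (hlat : w34 + l2 * Ω2 = s * u12 + c * (w12 - l1 * Ω1))
    (hΩ : Ω2 = Ω1 - γd) :
    (l2 + l1 * c) * u34 + l1 * s * w34 =
      (l2 * c + l1) * u12 - l2 * s * w12 + l1 * l2 * s * γd := by
  linear_combination (l2 + l1 * c) * hlong + l1 * s * hlat - l1 * l2 * s * hΩ + l1 * u12 * hcs

theorem trailer_speed_mul_eq {l1 l2 γ γd v12 α12 v34 α34 Ω1 Ω2 : ℝ}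
    (hE1 : v34 * Real.cos α34 =
      Real.cos γ * (v12 * Real.cos α12) - Real.sin γ * (v12 * Real.sin α12 - l1 * Ω1))
    (hE2 : v34 * Real.sin α34 + l2 * Ω2 =
      Real.sin γ * (v12 * Real.cos α12) + Real.cos γ * (v12 * Real.sin α12 - l1 * Ω1))
    (hE3 : Ω2 = Ω1 - γd) :
    v34 * (l2 * Real.cos α34 + l1 * Real.cos (γ - α34)) =
      (l2 * Real.cos (γ + α12) + l1 * Real.cos α12) * v12 + l1 * l2 * Real.sin γ * γd := by
  have hproj := trailer_velocity_projection_eq (Real.sin_sq_add_cos_sq γ) hE1 hE2 hE3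
  rw [Real.cos_sub, Real.cos_add]
  linear_combination hproj

theorem zero_slip_angle_speed_relation_general
    {l1 l2 γ γd v12 α12 v34 α34 Ω1 Ω2 : ℝ}
    (hE1 : v34 * Real.cos α34 =
      Real.cos γ * (v12 * Real.cos α12) - Real.sin γ * (v12 * Real.sin α12 - l1 * Ω1))
    (hE2 : v34 * Real.sin α34 + l2 * Ω2 =
      Real.sin γ * (v12 * Real.cos α12) + Real.cos γ * (v12 * Real.sin α12 - l1 * Ω1))
    (hE3 : Ω2 = Ω1 - γd)
    (hD : l2 * Real.cos α34 + l1 * Real.cos (γ - α34) ≠ 0) :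
    v34 = ((l2 * Real.cos (γ + α12) + l1 * Real.cos α12) * v12 + l1 * l2 * Real.sin γ * γd) /
        (l2 * Real.cos α34 + l1 * Real.cos (γ - α34)) ∧
    ∀ ωf ωb r : ℝ, v12 = ωf * r → v34 = ωb * r →
      ωb * r -
        ((l2 * Real.cos (γ + α12) + l1 * Real.cos α12) /
          (l2 * Real.cos α34 + l1 * Real.cos (γ - α34))) * (ωf * r) -
        (l2 * Real.sin γ / (l2 * Real.cos α34 + l1 * Real.cos (γ - α34))) * (l1 * γd) = 0 := by
  have hv34 := eq_div_of_mul_eq hD (trailer_speed_mul_eq hE1 hE2 hE3)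
  refine ⟨hv34, fun ωf ωb r hf hb => ?_⟩
  rw [← hf, ← hb, hv34]
  ring

/-- Under (E1), (E2), (E3), with `D ≠ 0` and vanishing slip angles
`α12 = α34 = 0`, the trailer speed satisfies
`v34 = ((l2·cos γ + l1)·v12 + l1·l2·sin γ·γ̇) / (l2 + l1·cos γ)`; consequently, if the
mean wheel speeds satisfy `v12 = ω_f·r` and `v34 = ω_b·r`, then
`ω_b·r − ((l2·cos γ + l1)/(l2 + l1·cos γ))·ω_f·r − (l2·sin γ/(l2 + l1·cos γ))·l1·γ̇ = 0`. -/
theorem zero_slip_angle_speed_relation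
    (l1 l2 γ γd v12 α12 v34 α34 Ω1 Ω2 : ℝ)
    (hE1 : v34 * Real.cos α34 =
      Real.cos γ * (v12 * Real.cos α12) -
        Real.sin γ * (v12 * Real.sin α12 - l1 * Ω1))
    (hE2 : v34 * Real.sin α34 + l2 * Ω2 =
      Real.sin γ * (v12 * Real.cos α12) +
        Real.cos γ * (v12 * Real.sin α12 - l1 * Ω1))
    (hE3 : Ω2 = Ω1 - γd)
    (hD : l2 * Real.cos α34 + l1 * Real.cos (γ - α34) ≠ 0)
    (h12 : α12 = 0) (h34 : α34 = 0) :
    v34 = ((l2 * Real.cos γ + l1) * v12 + l1 * l2 * Real.sin γ * γd) /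
        (l2 + l1 * Real.cos γ) ∧
    ∀ ωf ωb r : ℝ, v12 = ωf * r → v34 = ωb * r →
      ωb * r - ((l2 * Real.cos γ + l1) / (l2 + l1 * Real.cos γ)) * (ωf * r) -
        (l2 * Real.sin γ / (l2 + l1 * Real.cos γ)) * (l1 * γd) = 0 := by
  subst h12 h34
  simpa using zero_slip_angle_speed_relation_general hE1 hE2 hE3 hD
end
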